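/- Let M be an m×p real matrix of rank p and N an n×p real matrix of rank p. The kernel of the linear map Φ(Ṁ, Ṅ) = Ṁ Nᵀ + M Ṅᵀ equals the set { (M Ṙ, −N Ṙᵀ) : Ṙ ∈ ℝ^{p×p} }; in particular this kernel is a linear subspace of dimension p². -/

import Mathlib

open Matrix

/-- The differential of π : (M,N) ↦ M Nᵀ at (M,N). -/
def dPi (m n p : ℕ) (M : Matrix (Fin m) (Fin p) ℝ) (N : Matrix (Fin n) (Fin p) ℝ) :
    (Matrix (Fin m) (Fin p) ℝ × Matrix (Fin n) (Fin p) ℝ) →ₗ[ℝ] Matrix (Fin m) (Fin n) ℝ where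
  toFun d := d.1 * Nᵀ + M * d.2ᵀ
  map_add' a b := by
    simp [Matrix.add_mul, Matrix.mul_add, Matrix.transpose_add]
    abel
  map_smul' c a := by
    simp [Matrix.transpose_smul, Matrix.smul_mul, Matrix.mul_smul, smul_add]

section FullColumnRank

variable {R K k m p : Type*} [Fintype p]

theorem mulVec_injective_of_rank_eq_card [CommRing R] [Nontrivial R] {M : Matrix m p R}
    (hM : M.rank = Fintype.card p) : Function.Injective M.mulVec := by
  rw [mulVec_injective_iff, linearIndependent_iff_card_eq_finrank_span, Set.finrank,
    ← rank_eq_finrank_span_cols, hM]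

theorem exists_mul_eq_one_of_mulVec_injective [Field K] [Fintype m] [DecidableEq p]
    {M : Matrix m p K} (hM : Function.Injective M.mulVec) : ∃ A : Matrix p m K, A * M = 1 := by
  classical
  obtain ⟨g, hg⟩ := (toLin' M).exists_leftInverse_of_injective (LinearMap.ker_eq_bot.2 hM)
  refine ⟨LinearMap.toMatrix' g, ?_⟩
  rw [← LinearMap.toMatrix'_toLin' M, ← LinearMap.toMatrix'_comp, hg, LinearMap.toMatrix'_id]

theorem mul_right_injective_of_mulVec_injective [NonUnitalNonAssocSemiring R] {M : Matrix m p R}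
    (hM : Function.Injective M.mulVec) : Function.Injective fun X : Matrix p k R => M * X :=
  fun _ _ h => Matrix.ext_col fun j => hM (congrArg (col · j) h)

end FullColumnRank

section MulTranspose

variable {R m n p : Type*} [CommRing R] [Fintype p]

/-- The differential `(X, Y) ↦ X Nᵀ + M Yᵀ` at `(M, N)` of the map `(M, N) ↦ M Nᵀ`, over an
arbitrary commutative ring. -/
def mulTransposeDifferential (M : Matrix m p R) (N : Matrix n p R) :
    Matrix m p R × Matrix n p R →ₗ[R] Matrix m n R :=
  (mulRightLinearMap m R Nᵀ).coprod
    (mulLeftLinearMap n R M ∘ₗ (transposeLinearEquiv n p R R).toLinearMap)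

/-- The parametrization `Z ↦ (M Z, -N Zᵀ)` of the vertical space at `(M, N)`: the derivative
at `g = 1` of `g ↦ (M g, N g⁻ᵀ)`, which moves along the fiber of `(M, N) ↦ M Nᵀ`. -/
def verticalMap (M : Matrix m p R) (N : Matrix n p R) :
    Matrix p p R →ₗ[R] Matrix m p R × Matrix n p R :=
  (mulLeftLinearMap p R M).prod
    (-(mulLeftLinearMap p R N ∘ₗ (transposeLinearEquiv p p R R).toLinearMap))

theorem mulTransposeDifferential_apply (M : Matrix m p R) (N : Matrix n p R)
    (d : Matrix m p R × Matrix n p R) :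
    mulTransposeDifferential M N d = d.1 * Nᵀ + M * d.2ᵀ :=
  rfl

theorem verticalMap_apply (M : Matrix m p R) (N : Matrix n p R) (Z : Matrix p p R) :
    verticalMap M N Z = (M * Z, -(N * Zᵀ)) :=
  rfl

theorem verticalMap_injective {M : Matrix m p R} (hM : Function.Injective M.mulVec)
    (N : Matrix n p R) : Function.Injective (verticalMap M N) :=
  fun _ _ h => mul_right_injective_of_mulVec_injective hM (congrArg Prod.fst h)

theorem range_verticalMap_le_ker_mulTransposeDifferential (M : Matrix m p R) (N : Matrix n p R) :
    LinearMap.range (verticalMap M N) ≤ LinearMap.ker (mulTransposeDifferential M N) := by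
  rintro _ ⟨Z, rfl⟩
  simp [mulTransposeDifferential_apply, verticalMap_apply, Matrix.mul_assoc]

theorem ker_mulTransposeDifferential_le_range_verticalMap [Fintype m] [DecidableEq p]
    {M : Matrix m p R} {N : Matrix n p R} {A : Matrix p m R} (hA : A * M = 1)
    (hN : Function.Injective N.mulVec) :
    LinearMap.ker (mulTransposeDifferential M N) ≤ LinearMap.range (verticalMap M N) := by
  rintro ⟨X, Y⟩ h
  have hXY : X * Nᵀ = -(M * Yᵀ) := eq_neg_of_add_eq_zero_left h
  -- Since `A * M = 1`, the only candidate for `Z` with `X = M * Z` is `A * X`.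
  have hYt : Yᵀ = -(A * X * Nᵀ) := by
    rw [Matrix.mul_assoc, hXY, Matrix.mul_neg, ← Matrix.mul_assoc, hA, Matrix.one_mul, neg_neg]
  have hY : Y = -(N * (A * X)ᵀ) := by
    simpa only [transpose_transpose, transpose_neg, transpose_mul] using congrArg transpose hYt
  have hNX : N * Xᵀ = N * (M * (A * X))ᵀ := by
    rw [← transpose_inj, transpose_mul, transpose_mul, transpose_transpose, transpose_transpose,
      hXY, hYt, Matrix.mul_neg, neg_neg, Matrix.mul_assoc M]
  have hX : X = M * (A * X) := transpose_injective (mul_right_injective_of_mulVec_injective hN hNX)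
  exact ⟨A * X, Prod.ext hX.symm hY.symm⟩

theorem dPi_ker_general [Nontrivial R] [Fintype m] [DecidableEq p] {M : Matrix m p R}
    {N : Matrix n p R} {A : Matrix p m R} (hA : A * M = 1) (hN : Function.Injective N.mulVec) :
    (LinearMap.ker (mulTransposeDifferential M N) : Set (Matrix m p R × Matrix n p R)) =
      {d | ∃ Z : Matrix p p R, d.1 = M * Z ∧ d.2 = -(N * Zᵀ)} ∧
    Module.finrank R (LinearMap.ker (mulTransposeDifferential M N)) = Fintype.card p ^ 2 := by
  have hker : LinearMap.ker (mulTransposeDifferential M N) = LinearMap.range (verticalMap M N) :=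
    (ker_mulTransposeDifferential_le_range_verticalMap hA hN).antisymm
      (range_verticalMap_le_ker_mulTransposeDifferential M N)
  have hM : Function.Injective M.mulVec :=
    Function.LeftInverse.injective (g := A.mulVec) fun v => by rw [mulVec_mulVec, hA, one_mulVec]
  rw [hker]
  constructor
  · ext d
    simp [verticalMap_apply, Prod.ext_iff, eq_comm]
  · rw [LinearMap.finrank_range_of_inj (verticalMap_injective hM N), Module.finrank_matrix,
      Module.finrank_self, mul_one, sq]

end MulTranspose

/-- The kernel of the differential of π at a full-rank pair (M,N) (the vertical space)
equals { (M Ṙ, −N Ṙᵀ) : Ṙ ∈ ℝ^{p×p} }, a subspace of dimension p². -/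
theorem dPi_ker (m n p : ℕ) (hp : 0 < p) (hpm : p ≤ m) (hpn : p ≤ n)
    (M : Matrix (Fin m) (Fin p) ℝ) (N : Matrix (Fin n) (Fin p) ℝ)
    (hM : M.rank = p) (hN : N.rank = p) :
    (LinearMap.ker (dPi m n p M N) : Set (Matrix (Fin m) (Fin p) ℝ × Matrix (Fin n) (Fin p) ℝ)) =
      {d : Matrix (Fin m) (Fin p) ℝ × Matrix (Fin n) (Fin p) ℝ |
        ∃ R : Matrix (Fin p) (Fin p) ℝ, d.1 = M * R ∧ d.2 = -(N * Rᵀ)} ∧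
    Module.finrank ℝ (LinearMap.ker (dPi m n p M N)) = p ^ 2 := by
  have hM_inj : Function.Injective M.mulVec := mulVec_injective_of_rank_eq_card (by simpa using hM)
  have hN_inj : Function.Injective N.mulVec := mulVec_injective_of_rank_eq_card (by simpa using hN)
  obtain ⟨A, hA⟩ := exists_mul_eq_one_of_mulVec_injective hM_inj
  have hdPi : dPi m n p M N = mulTransposeDifferential M N := rfl
  rw [hdPi]
  simpa only [Fintype.card_fin] using dPi_ker_general hA hN_inj
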